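/- arXiv:2310.15828 — 7 statements merged into one kernel-verified Lean document; each statement's English description precedes it below -/
import Mathlib

section
/- Let k_h > 0 and ω_h ≥ 0 be real numbers, and let e, x_h, d be real numbers such that either (integrator mode) d = ω_h·e and the sector constraint e·x_h ≥ (1/k_h)·x_h² holds, or (gain mode) x_h = k_h·e. Then (1/k_h)·x_h·d ≤ e·d. In other words, along any trajectory of the HIGS with state derivative d, the storage function V(x_h) = x_h²/(2k_h) satisfies V̇ = (1/k_h)·x_h·d ≤ e·d, so the HIGS is a nonlinear negative imaginary system. -/
/-- A single HIGS is nonlinear negative imaginary: in either mode (integrator mode,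
where the state derivative is `d = ω_h·e` and the sector constraint holds, or gain
mode, where `x_h = k_h·e`), the storage function `V(x_h) = x_h²/(2k_h)` satisfies
`V̇ = (1/k_h)·x_h·d ≤ e·d`. -/
theorem higs_nni (k_h ω_h e x_h d : ℝ) (hk : 0 < k_h) (hω : 0 ≤ ω_h)
    (hmode : (d = ω_h * e ∧ e * x_h ≥ (1 / k_h) * x_h ^ 2) ∨ x_h = k_h * e) :
    (1 / k_h) * x_h * d ≤ e * d := by
  obtain ⟨y, rfl⟩ : ∃ y, x_h = k_h * y := ⟨x_h / k_h, by field_simp⟩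
  have h1 : (1 / k_h) * (k_h * y) = y := by field_simp
  rw [h1]
  rcases hmode with ⟨rfl, hs⟩ | hg
  · have h2 : (1 / k_h) * (k_h * y) ^ 2 = k_h * y ^ 2 := by field_simp
    rw [h2] at hs
    have h3 : y ^ 2 ≤ e * y := by
      refine le_of_mul_le_mul_left ?_ hk
      linarith
    have h4 : 0 ≤ e * e - y * e := by nlinarith [sq_nonneg (e - y)]
    nlinarith [mul_nonneg hω h4]
  · have h5 : y = e := mul_left_cancel₀ hk.ne' hg
    rw [h5]
end

section
/- Let N be a positive integer and for each i ∈ {1, …, N} let k_{h,i} > 0 and ω_{h,i} ≥ 0 be real numbers, and let e_i, x_{h,i}, d_i be real numbers such that either (integrator mode) d_i = ω_{h,i}·e_i and e_i·x_{h,i} ≥ (1/k_{h,i})·x_{h,i}², or (gain mode) x_{h,i} = k_{h,i}·e_i. Then Σ_{i=1}^N (1/k_{h,i})·x_{h,i}·d_i ≤ Σ_{i=1}^N e_i·d_i. In other words, the multi-HIGS with state derivative (d_1, …, d_N) satisfies V̂̇(X_h) ≤ E_hᵀU̇_h for the storage function V̂(X_h) = ½·X_hᵀK_h⁻¹X_h,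 where K_h = diag(k_{h,1}, …, k_{h,N}), so the multi-HIGS is a nonlinear negative imaginary system. -/
open scoped BigOperators

/-- A multi-HIGS (the parallel connection of `N` HIGS elements) is nonlinear negative
imaginary: if each channel is in integrator mode (derivative `dᵢ = ω_{h,i}·eᵢ` and the
sector constraint holds) or in gain mode (`x_{h,i} = k_{h,i}·eᵢ`), then the storage
function `V̂(X_h) = ½·X_hᵀK_h⁻¹X_h` satisfies
`V̂̇ = Σᵢ (1/k_{h,i})·x_{h,i}·dᵢ ≤ Σᵢ eᵢ·dᵢ = E_hᵀU̇_h`. -/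
theorem multi_higs_nni (N : ℕ) (hN : 0 < N)
    (k ω e x d : Fin N → ℝ)
    (hk : ∀ i, 0 < k i) (hω : ∀ i, 0 ≤ ω i)
    (hmode : ∀ i, (d i = ω i * e i ∧ e i * x i ≥ (1 / k i) * (x i) ^ 2) ∨
      x i = k i * e i) :
    ∑ i, (1 / k i) * x i * d i ≤ ∑ i, e i * d i := by
  refine Finset.sum_le_sum fun i _ => ?_
  have hki := hk i
  rcases hmode i with ⟨hd, hs⟩ | hx
  · obtain ⟨y, hy⟩ : ∃ y, x i = k i * y := ⟨x i / k i, by field_simp⟩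
    have h1 : 1 / k i * x i = y := by rw [hy]; field_simp
    have h2 : y ^ 2 ≤ e i * y := by
      have h3 : 1 / k i * (x i) ^ 2 = k i * y ^ 2 := by rw [hy]; field_simp
      rw [h3, hy] at hs
      have h4 : k i * y ^ 2 ≤ k i * (e i * y) := by linarith
      exact le_of_mul_le_mul_left h4 hki
    have h5 : 0 ≤ e i * (e i - y) := by nlinarith [sq_nonneg (e i - y)]
    rw [h1, hd]
    nlinarith [mul_nonneg (hω i) h5]
  · have h1 : 1 / k i * x i = e i := by rw [hx]; field_simp
    rw [h1]
end

section
/- Let k > 0 and ω > 0 be real numbers, and let e, x, d be real numbers such that either (gain mode) x = k·e, or (integrator mode) d = ω·e and the sector constraint e·x ≥ (1/k)·x² holds. If (1/k)·x·d = e·d, then x = k·e. (Consequently, for a multi-HIGS applied channel-wise, the equality V̂̇(X_h) = E_hᵀU̇_h implies X_h = K_hE_h.) -/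
/-- For a HIGS with gain `k > 0` and integrator frequency `ω > 0`, in either mode,
equality `V̇ = (1/k)·x·d = e·d` in the NNI dissipation inequality forces the state to
lie on the sector boundary `x = k·e`. -/
theorem higs_lossless_condition (k ω e x d : ℝ) (hk : 0 < k) (hω : 0 < ω)
    (hmode : x = k * e ∨ (d = ω * e ∧ e * x ≥ (1 / k) * x ^ 2))
    (heq : (1 / k) * x * d = e * d) :
    x = k * e := by
  rcases hmode with h | ⟨hd, hs⟩
  · exact h
  · by_cases he : e = 0
    · subst he
      have hk' : 0 < 1 / k := by positivity
      have hx2 : x ^ 2 ≤ 0 := by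
        by_contra hc
        have := mul_pos hk' (not_le.mp hc)
        linarith
      have hx : x = 0 := by
        have h0 : x ^ 2 = 0 := le_antisymm hx2 (sq_nonneg x)
        exact pow_eq_zero_iff (two_ne_zero) |>.mp h0
      simp [hx]
    · have hd0 : d ≠ 0 := by
        rw [hd]
        exact mul_ne_zero hω.ne' he
      have h1 : (1 / k) * x = e := mul_right_cancel₀ hd0 heq
      rw [← h1]
      field_simp
end

section
/- Let k > 0 and ω > 0 be real numbers, let t_a < t_b, and let e, x : ℝ → ℝ be continuous on the interval [t_a, t_b] with e(t)·x(t) = (1/k)·x(t)² for all t ∈ [t_a, t_b]. Suppose that for every t ∈ [t_a, t_b], either x(t) = k·e(t) (gain mode) or x has derivative ω·e(t) at t within [t_a, t_b] (integrator mode). Then x(t) = k·e(t) for all t ∈ [t_a, t_b]. -/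
open Set

/-- If the state of a HIGS stays on the boundary of the sector,
`e(t)·x(t) = (1/k)·x(t)²`, over a whole interval `[t_a, t_b]`, while at each time
the HIGS is either in gain mode (`x(t) = k·e(t)`) or in integrator mode
(`x` has derivative `ω·e(t)` at `t` within the interval), then in fact
`x(t) = k·e(t)` throughout the interval. -/
theorem higs_boundary_implies_gain (k ω t_a t_b : ℝ) (e x : ℝ → ℝ)
    (hk : 0 < k) (hω : 0 < ω) (hab : t_a < t_b)
    (he_cont : ContinuousOn e (Icc t_a t_b))
    (hx_cont : ContinuousOn x (Icc t_a t_b))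
    (hboundary : ∀ t ∈ Icc t_a t_b, e t * x t = (1 / k) * (x t) ^ 2)
    (hmode : ∀ t ∈ Icc t_a t_b,
      x t = k * e t ∨ HasDerivWithinAt x (ω * e t) (Icc t_a t_b) t) :
    ∀ t ∈ Icc t_a t_b, x t = k * e t := by
  intro t ht
  by_contra hne
  have key : ∀ s ∈ Icc t_a t_b, x s ≠ k * e s → x s = 0 := by
    intro s hs hns
    have h := hboundary s hs
    have h2 : x s * (x s - k * e s) = 0 := by
      field_simp at h
      linarith
    rcases mul_eq_zero.mp h2 with h3 | h3
    · exact h3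
    · exact absurd (sub_eq_zero.mp h3) hns
  have hx0 : x t = 0 := key t ht hne
  have he0 : e t ≠ 0 := by
    intro h
    apply hne
    rw [hx0, h, mul_zero]
  have hd : HasDerivWithinAt x (ω * e t) (Icc t_a t_b) t :=
    (hmode t ht).resolve_left hne
  have hcont : ContinuousWithinAt (fun s => x s - k * e s) (Icc t_a t_b) t :=
    (hx_cont t ht).sub (continuousWithinAt_const.mul (he_cont t ht))
  have hev : ∀ᶠ s in nhdsWithin t (Icc t_a t_b), x s - k * e s ≠ 0 :=
    hcont.eventually_ne (sub_ne_zero.mpr hne)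
  have hz : x =ᶠ[nhdsWithin t (Icc t_a t_b)] fun _ => (0 : ℝ) := by
    filter_upwards [hev, self_mem_nhdsWithin] with s hs hsI
    exact key s hsI (sub_ne_zero.mp hs)
  have hd0 : HasDerivWithinAt x 0 (Icc t_a t_b) t :=
    (hasDerivWithinAt_const t (Icc t_a t_b) (0 : ℝ)).congr_of_eventuallyEq hz hx0
  have huniq : ω * e t = 0 := (uniqueDiffOn_Icc hab t ht).eq_deriv _ hd hd0
  exact (mul_ne_zero hω.ne' he0) huniq
end

section
/- Let k_1, k_2 > 0 and ω_1, ω_2 ≥ 0 be real numbers with k_2·ω_1 ≤ k_1·ω_2, and let a be a real number with 0 < a < k_2/(2k_1). Let e_1, ė_1, x_1, d_1, x_2, d_2 be real numbers such that: either d_1 = ω_1·e_1 and e_1·x_1 ≥ (1/k_1)·x_1², or x_1 = k_1·e_1, d_1 = k_1·ė_1 and ω_1·e_1² > k_1·e_1·ė_1 (the two modes of the first HIGS); and either d_2 = ω_2·x_1 and x_1·x_2 ≥ (1/k_2)·x_2², or x_2 = k_2·x_1, d_2 = k_2·d_1 and ω_2·x_1² > k_2·x_1·d_1 (the two modes of the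 second HIGS, whose input is e_2 = x_1). Then 2a·x_1·d_1 + ((k_2 − 2a·k_1)/(k_1·k_2²))·x_2·d_2 ≤ e_1·d_2. In other words, the cascade of the two HIGS is nonlinear negative imaginary with storage function V(x_1, x_2) = a·x_1² + ((k_2 − 2a·k_1)/(2k_1·k_2²))·x_2², satisfying V̇ ≤ e_1·ẋ_2 in all four mode combinations. -/
/-- The cascade of two HIGS is nonlinear negative imaginary: with gains
`k₁, k₂ > 0`, integrator frequencies `ω₁, ω₂ ≥ 0` satisfying `k₂·ω₁ ≤ k₁·ω₂`, and
parameter `0 < a < k₂/(2k₁)`, the storage function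
`V(x₁,x₂) = a·x₁² + ((k₂ − 2a·k₁)/(2k₁·k₂²))·x₂²` satisfies
`V̇ = 2a·x₁·d₁ + ((k₂ − 2a·k₁)/(k₁·k₂²))·x₂·d₂ ≤ e₁·d₂` in all four mode
combinations. -/
theorem cascaded_higs_nni (k₁ k₂ ω₁ ω₂ a e₁ e₁' x₁ d₁ x₂ d₂ : ℝ)
    (hk₁ : 0 < k₁) (hk₂ : 0 < k₂) (hω₁ : 0 ≤ ω₁) (hω₂ : 0 ≤ ω₂)
    (hωk : k₂ * ω₁ ≤ k₁ * ω₂) (ha₀ : 0 < a) (ha₁ : a < k₂ / (2 * k₁))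
    (hmode₁ : (d₁ = ω₁ * e₁ ∧ e₁ * x₁ ≥ (1 / k₁) * x₁ ^ 2) ∨
      (x₁ = k₁ * e₁ ∧ d₁ = k₁ * e₁' ∧ ω₁ * e₁ ^ 2 > k₁ * e₁ * e₁'))
    (hmode₂ : (d₂ = ω₂ * x₁ ∧ x₁ * x₂ ≥ (1 / k₂) * x₂ ^ 2) ∨
      (x₂ = k₂ * x₁ ∧ d₂ = k₂ * d₁ ∧ ω₂ * x₁ ^ 2 > k₂ * x₁ * d₁)) :
    2 * a * x₁ * d₁ + ((k₂ - 2 * a * k₁) / (k₁ * k₂ ^ 2)) * x₂ * d₂ ≤ e₁ * d₂ := by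
  have hc : 0 < k₂ - 2 * a * k₁ := by
    rw [lt_div_iff₀ (by positivity)] at ha₁
    linarith
  -- sector bounds for the first element
  have hx : x₁ ^ 2 ≤ k₁ * (e₁ * x₁) := by
    rcases hmode₁ with ⟨_, h⟩ | ⟨h, _, _⟩
    · have h2 := mul_le_mul_of_nonneg_left h hk₁.le
      have h3 : k₁ * (1 / k₁ * x₁ ^ 2) = x₁ ^ 2 := by field_simp
      linarith
    · rw [h]; apply le_of_eq; ring
  have hd : x₁ * d₁ ≤ ω₁ * (e₁ * x₁) := by
    rcases hmode₁ with ⟨h, _⟩ | ⟨h, h', h3⟩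
    · rw [h]; apply le_of_eq; ring
    · have h4 := mul_le_mul_of_nonneg_left h3.le hk₁.le
      rw [h, h']
      linarith
  have hex : 0 ≤ e₁ * x₁ := by
    by_contra hneg
    push Not at hneg
    have := mul_neg_of_pos_of_neg hk₁ hneg
    linarith [sq_nonneg x₁]
  have hkk : 0 < k₁ * k₂ ^ 2 := by positivity
  have key : 2 * a * x₁ * d₁ * (k₁ * k₂ ^ 2) + (k₂ - 2 * a * k₁) * x₂ * d₂
      ≤ e₁ * d₂ * (k₁ * k₂ ^ 2) := by
    rcases hmode₂ with ⟨h, h2⟩ | ⟨h, h', _⟩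
    · have h3 : x₂ ^ 2 ≤ k₂ * (x₁ * x₂) := by
        have h2' := mul_le_mul_of_nonneg_left h2 hk₂.le
        have h3 : k₂ * (1 / k₂ * x₂ ^ 2) = x₂ ^ 2 := by field_simp
        linarith
      have h4 : x₁ * x₂ ≤ k₂ * x₁ ^ 2 := by
        have h5 : 0 ≤ k₂ * (k₂ * x₁ ^ 2 - x₁ * x₂) := by
          nlinarith [sq_nonneg (k₂ * x₁ - x₂)]
        have := nonneg_of_mul_nonneg_right h5 hk₂
        linarith
      have h5 : x₁ * x₂ ≤ k₂ * (k₁ * (e₁ * x₁)) :=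
        h4.trans (mul_le_mul_of_nonneg_left hx hk₂.le)
      have h6 := mul_le_mul_of_nonneg_left h5 (mul_nonneg hc.le hω₂)
      have h7 := mul_le_mul_of_nonneg_left hd
        (by positivity : 0 ≤ 2 * a * (k₁ * k₂ ^ 2))
      have h8 := mul_le_mul_of_nonneg_right hωk
        (by positivity : 0 ≤ 2 * a * k₁ * k₂ * (e₁ * x₁))
      rw [h]
      linarith
    · have h5 : x₁ * d₁ ≤ k₁ * (e₁ * d₁) := by
        rcases hmode₁ with ⟨g, _⟩ | ⟨g, _, _⟩
        · have h6 : e₁ * x₁ ≤ k₁ * e₁ ^ 2 := by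
            have h7 : 0 ≤ k₁ * (k₁ * e₁ ^ 2 - e₁ * x₁) := by
              nlinarith [sq_nonneg (k₁ * e₁ - x₁)]
            have := nonneg_of_mul_nonneg_right h7 hk₁
            linarith
          have := mul_le_mul_of_nonneg_left h6 hω₁
          rw [g]
          linarith
        · rw [g]; apply le_of_eq; ring
      have h6 := mul_le_mul_of_nonneg_left h5 (by positivity : 0 ≤ k₂ ^ 3)
      rw [h, h']
      linarith
  have e : (k₂ - 2 * a * k₁) / (k₁ * k₂ ^ 2) * x₂ * d₂
      = (k₂ - 2 * a * k₁) * x₂ * d₂ / (k₁ * k₂ ^ 2) := by ring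
  have key2 : (k₂ - 2 * a * k₁) * x₂ * d₂ / (k₁ * k₂ ^ 2)
      ≤ e₁ * d₂ - 2 * a * x₁ * d₁ := by
    rw [div_le_iff₀ hkk]
    linarith
  rw [e]
  linarith
end

section
/- Let k_1, k_2 > 0 and ω_1, ω_2 ≥ 0 be real numbers with k_2·ω_1 ≤ k_1·ω_2, and let a be a real number with 0 < a < k_2/(2k_1). Let e_1, ė_1, x_1, d_1, x_2, d_2 be real numbers with x_1 = k_1·e_1, d_1 = k_1·ė_1 and ω_1·e_1² > k_1·e_1·ė_1 (first HIGS in gain mode), and d_2 = ω_2·x_1 and x_1·x_2 ≥ (1/k_2)·x_2² (second HIGS in integrator mode). Then the strict inequality 2a·x_1·d_1 + ((k_2 − 2a·k_1)/(k_1·k_2²))·x_2·d_2 < e_1·d_2 holds. -/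
/-- Case 4 in the NNI proof for the cascade of two HIGS: if the first HIGS is in
gain mode and the second in integrator mode, the dissipation inequality is strict:
`V̇ = 2a·x₁·d₁ + ((k₂ − 2a·k₁)/(k₁·k₂²))·x₂·d₂ < e₁·d₂`. -/
theorem cascaded_higs_strict_case (k₁ k₂ ω₁ ω₂ a e₁ e₁' x₁ d₁ x₂ d₂ : ℝ)
    (hk₁ : 0 < k₁) (hk₂ : 0 < k₂) (hω₁ : 0 ≤ ω₁) (hω₂ : 0 ≤ ω₂)
    (hωk : k₂ * ω₁ ≤ k₁ * ω₂) (ha₀ : 0 < a) (ha₁ : a < k₂ / (2 * k₁))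
    (hgain₁ : x₁ = k₁ * e₁) (hd₁ : d₁ = k₁ * e₁')
    (hsw₁ : ω₁ * e₁ ^ 2 > k₁ * e₁ * e₁')
    (hint₂ : d₂ = ω₂ * x₁) (hsector₂ : x₁ * x₂ ≥ (1 / k₂) * x₂ ^ 2) :
    2 * a * x₁ * d₁ + ((k₂ - 2 * a * k₁) / (k₁ * k₂ ^ 2)) * x₂ * d₂ < e₁ * d₂ := by
  have hak : 0 < k₂ - 2 * a * k₁ := by
    rw [lt_div_iff₀ (by positivity)] at ha₁
    linarith
  have hs : x₂ ^ 2 ≤ k₂ * (x₁ * x₂) := by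
    have h := mul_le_mul_of_nonneg_left hsector₂ hk₂.le
    have h2 : k₂ * (1 / k₂ * x₂ ^ 2) = x₂ ^ 2 := by field_simp
    linarith
  have hp : x₁ * x₂ ≤ k₂ * x₁ ^ 2 := by
    have h : k₂ * (x₁ * x₂) ≤ k₂ * (k₂ * x₁ ^ 2) := by
      nlinarith [sq_nonneg (k₂ * x₁ - x₂)]
    exact le_of_mul_le_mul_left h hk₂
  have h1 : 2 * a * x₁ * d₁ < 2 * a * k₁ * (ω₁ * e₁ ^ 2) := by
    have h := mul_lt_mul_of_pos_left hsw₁ (by positivity : 0 < 2 * a * k₁)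
    rw [hgain₁, hd₁]
    linarith
  have h2 : ω₁ * e₁ ^ 2 ≤ k₁ * ω₂ / k₂ * e₁ ^ 2 := by
    apply mul_le_mul_of_nonneg_right _ (sq_nonneg _)
    rw [le_div_iff₀ hk₂]
    linarith
  have h3 := mul_le_mul_of_nonneg_left h2 (by positivity : 0 ≤ 2 * a * k₁)
  have h4 : (k₂ - 2 * a * k₁) / (k₁ * k₂ ^ 2) * x₂ * d₂
      ≤ (k₂ - 2 * a * k₁) / (k₁ * k₂ ^ 2) * ω₂ * (k₂ * x₁ ^ 2) := by
    have h := mul_le_mul_of_nonneg_left hp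
      (by positivity : 0 ≤ (k₂ - 2 * a * k₁) / (k₁ * k₂ ^ 2) * ω₂)
    rw [hint₂]
    linarith
  have h5 : 2 * a * k₁ * (k₁ * ω₂ / k₂ * e₁ ^ 2)
      + (k₂ - 2 * a * k₁) / (k₁ * k₂ ^ 2) * ω₂ * (k₂ * x₁ ^ 2) = e₁ * d₂ := by
    rw [hint₂, hgain₁]
    field_simp
    ring
  linarith
end

section
/- Let A be an invertible real n×n matrix, Y a symmetric invertible real n×n matrix, C a real p×n matrix, and set B = −A·Y·Cᵀ. For any vectors x ∈ ℝⁿ and u ∈ ℝᵖ, if ẋ = A·x + B·u, then xᵀY⁻¹ẋ − uᵀ(C·ẋ) = ½·ẋᵀ·(A⁻ᵀY⁻¹ + Y⁻¹A⁻¹)·ẋ, where A⁻ᵀ denotes the transpose of A⁻¹. -/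
open Matrix

/-- Key Lyapunov-derivative computation: for an NI realization with `B = −A·Y·Cᵀ`
(`A` invertible, `Y` symmetric invertible), along `ẋ = A·x + B·u` we have
`xᵀY⁻¹ẋ − uᵀ(C·ẋ) = ½·ẋᵀ·(A⁻ᵀY⁻¹ + Y⁻¹A⁻¹)·ẋ`. -/
theorem lyapunov_derivative_identity (n p : ℕ)
    (A Y : Matrix (Fin n) (Fin n) ℝ) (C : Matrix (Fin p) (Fin n) ℝ)
    (B : Matrix (Fin n) (Fin p) ℝ)
    (hA : IsUnit A) (hYsymm : Y.IsSymm) (hY : IsUnit Y)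
    (hB : B = -(A * Y * Cᵀ))
    (x xdot : Fin n → ℝ) (u : Fin p → ℝ)
    (hxdot : xdot = A.mulVec x + B.mulVec u) :
    x ⬝ᵥ Y⁻¹.mulVec xdot - u ⬝ᵥ C.mulVec xdot =
      (1 / 2) * (xdot ⬝ᵥ ((A⁻¹)ᵀ * Y⁻¹ + Y⁻¹ * A⁻¹).mulVec xdot) := by
  have hAd : IsUnit A.det := (Matrix.isUnit_iff_isUnit_det A).1 hA
  have hYd : IsUnit Y.det := (Matrix.isUnit_iff_isUnit_det Y).1 hY
  have hYi : (Y⁻¹)ᵀ = Y⁻¹ := by rw [Matrix.transpose_nonsing_inv, hYsymm.eq]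
  have hz : A⁻¹ *ᵥ xdot = x - Y *ᵥ (Cᵀ *ᵥ u) := by
    rw [hxdot, hB, Matrix.neg_mulVec, Matrix.mulVec_add, Matrix.mulVec_neg,
      ← Matrix.mulVec_mulVec, ← Matrix.mulVec_mulVec, Matrix.mulVec_mulVec,
      Matrix.mulVec_mulVec _ A⁻¹ A, Matrix.nonsing_inv_mul A hAd, Matrix.one_mulVec,
      Matrix.one_mulVec, sub_eq_add_neg]
  have adj : ∀ {k l : ℕ} (M : Matrix (Fin k) (Fin l) ℝ) (a : Fin l → ℝ) (b : Fin k → ℝ),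
      a ⬝ᵥ Mᵀ *ᵥ b = (M *ᵥ a) ⬝ᵥ b := by
    intro k l M a b
    rw [Matrix.dotProduct_mulVec, Matrix.vecMul_transpose]
  have h1 : xdot ⬝ᵥ ((A⁻¹)ᵀ * Y⁻¹) *ᵥ xdot = (A⁻¹ *ᵥ xdot) ⬝ᵥ (Y⁻¹ *ᵥ xdot) := by
    rw [← Matrix.mulVec_mulVec, adj]
  have h2 : xdot ⬝ᵥ (Y⁻¹ * A⁻¹) *ᵥ xdot = (A⁻¹ *ᵥ xdot) ⬝ᵥ (Y⁻¹ *ᵥ xdot) := by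
    have h := adj Y⁻¹ xdot (A⁻¹ *ᵥ xdot)
    rw [hYi] at h
    rw [← Matrix.mulVec_mulVec, h, dotProduct_comm]
  have h3 : (Y *ᵥ (Cᵀ *ᵥ u)) ⬝ᵥ (Y⁻¹ *ᵥ xdot) = u ⬝ᵥ C *ᵥ xdot := by
    rw [← adj Y, hYsymm.eq, Matrix.mulVec_mulVec _ Y Y⁻¹, Matrix.mul_nonsing_inv Y hYd,
      Matrix.one_mulVec, ← adj Cᵀ, Matrix.transpose_transpose]
  rw [Matrix.add_mulVec, dotProduct_add, h1, h2, hz, sub_dotProduct, h3]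
  ring
end
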